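/- Let n ≥ 3 and let (λ_{iμ}) be an SAP-frame on an open set U ⊆ ℝⁿ with associated 1-form ω, where U is star-shaped (e.g. convex). Then the associated Riemannian metric g_{μν} := Σ_i λ_{iμ} λ_{iν} is conformally flat: there exists a smooth function f : U → ℝ with ∂_μ f = ω_μ on U, and the conformally rescaled metric ĝ_{μν} := e^{−2f} g_{μν} is flat, i.e. its Riemann curvature tensor R̂^α_{μνσ} := ∂_ν Γ̂^α_{μσ} − ∂_σ Γ̂^α_{μν} + Σ_ε (Γ̂^α_{εν} Γ̂^ε_{μσ} − Γ̂^α_{εσ} Γ̂^ε_{μν}) vanishes identically, where Γ̂ are the Levi-Civita coefficients of ĝ. -/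

import Mathlib

/-!
In terms of the coframe 1-forms `λ_j = Σ_μ λ_{jμ} dx^μ`, the SAP condition reads
`dλ_j = ω ∧ λ_j`. Applying `d` once more gives `dω ∧ λ_j = 0` for every `j`; since the
`λ_j` form a coframe and `n ≥ 3`, this forces `dω = 0` (`sap_form_closed`). The Poincaré lemma on
the star-shaped set `U` (`exists_primitive_of_starConvex`) yields `f` with `df = ω`, and then the
rescaled coframe `θ_j = e^{-f} λ_j` consists of closed forms, i.e. `∂_ν θ_{jμ}` is symmetric.

The metric `ĝ` is the one for which `θ` is orthonormal. Because the `θ_j` are closed, its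
Levi-Civita connection is the canonical connection of `θ`
(`leviCivita_eq_canonical`), and a canonical connection is always flat
(`canonical_curvature_eq_zero`).
-/

open scoped BigOperators

/-- Partial derivative of a scalar field on ℝⁿ in the ν-th coordinate direction. -/
noncomputable def pd {n : ℕ} (f : (Fin n → ℝ) → ℝ) (ν : Fin n) (x : Fin n → ℝ) : ℝ :=
  fderiv ℝ f x (Pi.single ν 1)

/-! ### Calculus of partial derivatives -/

section PartialDerivatives

variable {n : ℕ} {U : Set (Fin n → ℝ)} {f g : (Fin n → ℝ) → ℝ} {x : Fin n → ℝ}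

theorem ContDiffOn.diffAt_of_isOpen (hf : ContDiffOn ℝ (⊤ : ℕ∞) f U) (hU : IsOpen U)
    (hx : x ∈ U) : DifferentiableAt ℝ f x :=
  (hf.contDiffAt (hU.mem_nhds hx)).differentiableAt (by simp)

theorem pd_mul (hf : DifferentiableAt ℝ f x) (hg : DifferentiableAt ℝ g x) (ν : Fin n) :
    pd (fun y => f y * g y) ν x = pd f ν x * g x + f x * pd g ν x := by
  simp only [pd, fderiv_fun_mul hf hg]
  simp
  ring

theorem pd_sub (hf : DifferentiableAt ℝ f x) (hg : DifferentiableAt ℝ g x) (ν : Fin n) :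
    pd (fun y => f y - g y) ν x = pd f ν x - pd g ν x := by
  simp [pd, fderiv_fun_sub hf hg]

theorem pd_sum {ι : Type*} {s : Finset ι} {F : ι → (Fin n → ℝ) → ℝ}
    (hF : ∀ i ∈ s, DifferentiableAt ℝ (F i) x) (ν : Fin n) :
    pd (fun y => ∑ i ∈ s, F i y) ν x = ∑ i ∈ s, pd (F i) ν x := by
  simp [pd, fderiv_fun_sum hF]

theorem pd_congr_of_isOpen (hU : IsOpen U) (hx : x ∈ U) (h : ∀ y ∈ U, f y = g y) (ν : Fin n) :
    pd f ν x = pd g ν x := by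
  have : f =ᶠ[nhds x] g := by
    filter_upwards [hU.mem_nhds hx] with y hy using h y hy
  simp [pd, this.fderiv_eq]

theorem contDiffOn_pd (hf : ContDiffOn ℝ (⊤ : ℕ∞) f U) (hU : IsOpen U) (ν : Fin n) :
    ContDiffOn ℝ (⊤ : ℕ∞) (pd f ν) U :=
  (((contDiffOn_infty_iff_fderiv_of_isOpen hU).1 hf).2).clm_apply contDiffOn_const

theorem pd_comm (hf : ContDiffOn ℝ (⊤ : ℕ∞) f U) (hU : IsOpen U) (hx : x ∈ U) (μ ν : Fin n) :
    pd (pd f μ) ν x = pd (pd f ν) μ x := by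
  have h2 : ContDiffAt ℝ (⊤ : ℕ∞) f x := hf.contDiffAt (hU.mem_nhds hx)
  have hsymm : IsSymmSndFDerivAt ℝ f x :=
    (contDiffAt_infty.1 h2 2).isSymmSndFDerivAt (by simp)
  have hd : DifferentiableAt ℝ (fderiv ℝ f) x :=
    ((((contDiffOn_infty_iff_fderiv_of_isOpen hU).1 hf).2).contDiffAt
      (hU.mem_nhds hx)).differentiableAt (by simp)
  have key : ∀ α β : Fin n, pd (pd f α) β x
      = fderiv ℝ (fderiv ℝ f) x (Pi.single β 1) (Pi.single α 1) := by
    intro α β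
    change fderiv ℝ (fun y => fderiv ℝ f y (Pi.single α 1)) x (Pi.single β 1) = _
    rw [fderiv_clm_apply hd (differentiableAt_const _)]
    simp
  rw [key, key, hsymm.eq]

end PartialDerivatives

/-! ### The Poincaré lemma on star-convex sets -/

section Poincare

open Set AffineMap unitInterval
open scoped Topology

/-- The integral of a closed 1-form around a triangle `c, b, b'` vanishes. Since `c` is the centre
of the star-convex set `U`, the whole triangle lies in `U` as soon as the edge `[b, b']` does. -/
theorem curveIntegral_segment_add_of_starConvex {E : Type*} [NormedAddCommGroup E]
    [NormedSpace ℝ E] {U : Set E} (hU : IsOpen U) {c : E} (hstar : StarConvex ℝ c U)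
    {W : E → E →L[ℝ] ℝ} (hW : DifferentiableOn ℝ W U)
    (hdW : ∀ a ∈ U, ∀ x y, fderiv ℝ W a x y = fderiv ℝ W a y x)
    {b b' : E} (hbb' : segment ℝ b b' ⊆ U) :
    (∫ᶜ x in .segment c b, W x) + ∫ᶜ x in .segment b b', W x = ∫ᶜ x in .segment c b', W x := by
  set φ := ContinuousMap.Homotopy.affine (Path.segment c b : C(I, E)) (Path.segment c b')
  have hφs : range φ ⊆ U := by
    rw [range_subset_iff]
    rintro ⟨s, t⟩
    have h1 : lineMap b b' (s : ℝ) ∈ U :=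
      hbb' (by rw [segment_eq_image_lineMap]; exact mem_image_of_mem _ s.2)
    have h2 : φ (s, t) = lineMap c (lineMap b b' (s : ℝ)) (t : ℝ) := by
      simp only [φ, ContinuousMap.Homotopy.affine_apply]
      simp [lineMap_apply]
      module
    rw [h2]
    exact hstar.segment_subset h1 (by rw [segment_eq_image_lineMap]; exact mem_image_of_mem _ t.2)
  have hd : ∀ x ∈ U, HasFDerivAt W (fderiv ℝ W x) x := fun x hx =>
    (hW.differentiableAt (hU.mem_nhds hx)).hasFDerivAt
  have := φ.curveIntegral_add_curveIntegral_eq_of_hasFDerivWithinAt (t := range φ) (ω := W)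
    (dω := fderiv ℝ W) ?_ ?_ ?_ ?_ ?_
  · convert! this using 2
    · dsimp [φ]
      rw [← Path.cast_segment (Path.segment c b).target (Path.segment c b').target,
        curveIntegral_cast]
    · dsimp [φ]
      rw [← Path.cast_segment (Path.segment c b).source (Path.segment c b').source,
        curveIntegral_cast]
      simp
  · intros
    apply mem_range_self
  · exact fun x hx ↦ (hd x (hφs hx)).hasFDerivWithinAt
  · rw [(isCompact_range <| map_continuous _).isClosed.closure_eq]
    exact fun x hx ↦ (hd x <| hφs hx).continuousAt.continuousWithinAt
  · intro x hx u hu v hv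
    exact hdW x (hφs hx) u v
  · have : EqOn (fun x : ℝ × ℝ ↦ IccExtend zero_le_one (φ.extend x.1) x.2)
        (fun x ↦ lineMap (lineMap c b x.2) (lineMap c b' x.2) x.1) (Icc 0 1) := by
      rw [Icc_prod_eq]
      rintro ⟨x, y⟩ ⟨hx, hy⟩
      lift x to I using hx
      lift y to I using hy
      simp [φ]
    exact .congr (by fun_prop) this

/-- Poincaré lemma for 1-forms on a star-convex open set. -/
theorem exists_primitive_of_starConvex {E : Type*} [NormedAddCommGroup E]
    [NormedSpace ℝ E] {U : Set E} (hU : IsOpen U) {c : E} (hstar : StarConvex ℝ c U)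
    {W : E → E →L[ℝ] ℝ} (hW : DifferentiableOn ℝ W U)
    (hdW : ∀ a ∈ U, ∀ x y, fderiv ℝ W a x y = fderiv ℝ W a y x) :
    ∃ f : E → ℝ, ∀ a ∈ U, HasFDerivAt f (W a) a := by
  refine ⟨fun b => ∫ᶜ x in .segment c b, W x, fun b hb => ?_⟩
  obtain ⟨r, hr, hball⟩ := Metric.isOpen_iff.1 hU b hb
  have h1 : HasFDerivAt (fun b' => (∫ᶜ x in .segment c b, W x) + ∫ᶜ x in .segment b b', W x)
      (W b) b := by
    refine HasFDerivAt.const_add _ (HasFDerivAt.curveIntegral_segment_source' ?_)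
    filter_upwards [hU.mem_nhds hb] with z hz
    exact (hW.differentiableAt (hU.mem_nhds hz)).continuousAt
  refine h1.congr_of_eventuallyEq ?_
  filter_upwards [Metric.ball_mem_nhds b hr] with b' hb'
  exact (curveIntegral_segment_add_of_starConvex hU hstar hW hdW
    (((convex_ball b r).segment_subset (Metric.mem_ball_self hr) hb').trans hball)).symm

/-- Coordinate form of the Poincaré lemma, with a smooth primitive. -/
theorem exists_potential {n : ℕ} {U : Set (Fin n → ℝ)} (hU : IsOpen U) {c : Fin n → ℝ}
    (hstar : StarConvex ℝ c U) {ω : Fin n → (Fin n → ℝ) → ℝ}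
    (hω : ∀ μ, ContDiffOn ℝ (⊤ : ℕ∞) (ω μ) U)
    (hclosed : ∀ x ∈ U, ∀ μ ν, pd (ω μ) ν x = pd (ω ν) μ x) :
    ∃ f : (Fin n → ℝ) → ℝ, ContDiffOn ℝ (⊤ : ℕ∞) f U ∧ ∀ x ∈ U, ∀ μ, pd f μ x = ω μ x := by
  let P : Fin n → (Fin n → ℝ) →L[ℝ] ℝ := fun μ => ContinuousLinearMap.proj μ
  let W : (Fin n → ℝ) → (Fin n → ℝ) →L[ℝ] ℝ := fun x => ∑ μ, ω μ x • P μ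
  have hWs : ContDiffOn ℝ (⊤ : ℕ∞) W U :=
    ContDiffOn.sum fun μ _ => (hω μ).smul contDiffOn_const
  have hW1 : ∀ x ν, W x (Pi.single ν 1) = ω ν x := by
    intro x ν
    simp [W, P, Pi.single_apply]
  have hWd : ∀ a ∈ U, ∀ x y, fderiv ℝ W a x y = ∑ μ, fderiv ℝ (ω μ) a x * y μ := by
    intro a ha x y
    have hdiff : ∀ μ, DifferentiableAt ℝ (ω μ) a := fun μ => (hω μ).diffAt_of_isOpen hU ha
    have h : HasFDerivAt W (∑ μ, (fderiv ℝ (ω μ) a).smulRight (P μ)) a :=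
      HasFDerivAt.fun_sum fun μ _ => (hdiff μ).hasFDerivAt.smul_const (P μ)
    rw [h.fderiv]
    simp [P]
  have hexp : ∀ (L : (Fin n → ℝ) →L[ℝ] ℝ) (x : Fin n → ℝ),
      L x = ∑ ν, x ν * L (Pi.single ν 1) := by
    intro L x
    conv_lhs => rw [pi_eq_sum_univ' x]
    simp
  have hsym : ∀ a ∈ U, ∀ x y, fderiv ℝ W a x y = fderiv ℝ W a y x := by
    intro a ha x y
    rw [hWd a ha, hWd a ha]
    calc ∑ μ, fderiv ℝ (ω μ) a x * y μ = ∑ μ, ∑ ν, x ν * pd (ω μ) ν a * y μ := by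
          refine Finset.sum_congr rfl fun μ _ => ?_
          rw [hexp (fderiv ℝ (ω μ) a) x, Finset.sum_mul]
          rfl
      _ = ∑ ν, ∑ μ, x ν * pd (ω μ) ν a * y μ := Finset.sum_comm
      _ = ∑ μ, fderiv ℝ (ω μ) a y * x μ := by
          refine Finset.sum_congr rfl fun μ _ => ?_
          rw [hexp (fderiv ℝ (ω μ) a) y, Finset.sum_mul]
          refine Finset.sum_congr rfl fun ν _ => ?_
          rw [hclosed a ha ν μ, pd]
          ring
  have hWdiff : DifferentiableOn ℝ W U := hWs.differentiableOn (by simp)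
  obtain ⟨f, hf⟩ := exists_primitive_of_starConvex hU hstar hWdiff hsym
  refine ⟨f, ?_, fun x hx μ => ?_⟩
  · rw [contDiffOn_infty_iff_fderiv_of_isOpen hU]
    exact ⟨fun x hx => (hf x hx).differentiableAt.differentiableWithinAt,
      hWs.congr fun x hx => (hf x hx).fderiv⟩
  · rw [pd, (hf x hx).fderiv, hW1]

end Poincare

/-! ### Closedness, Levi-Civita connection and curvature of frames -/

section Frames

variable {n : ℕ} {U : Set (Fin n → ℝ)}

/-- If every form of a coframe satisfies `dλ_j = ω ∧ λ_j` and `n ≥ 3`, then `dω = 0`. -/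
theorem sap_form_closed (hn : 3 ≤ n) (hU : IsOpen U)
    {lam laminv : Fin n → Fin n → (Fin n → ℝ) → ℝ}
    (hlam : ∀ i μ, ContDiffOn ℝ (⊤ : ℕ∞) (lam i μ) U)
    (hinv : ∀ x ∈ U, ∀ μ ν, (∑ i, laminv i μ x * lam i ν x) = if μ = ν then (1:ℝ) else 0)
    {ω : Fin n → (Fin n → ℝ) → ℝ} (hω : ∀ μ, ContDiffOn ℝ (⊤ : ℕ∞) (ω μ) U)
    (hd : ∀ x ∈ U, ∀ j μ ν, pd (lam j μ) ν x - pd (lam j ν) μ x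
      = lam j μ x * ω ν x - lam j ν x * ω μ x) :
    ∀ x ∈ U, ∀ μ ν, pd (ω μ) ν x = pd (ω ν) μ x := by
  intro x hx ν σ
  have dl : ∀ j μ, DifferentiableAt ℝ (lam j μ) x := fun j μ => (hlam j μ).diffAt_of_isOpen hU hx
  have dw : ∀ μ, DifferentiableAt ℝ (ω μ) x := fun μ => (hω μ).diffAt_of_isOpen hU hx
  have dp : ∀ j μ ν, DifferentiableAt ℝ (pd (lam j μ) ν) x := fun j μ ν =>
    (contDiffOn_pd (hlam j μ) hU ν).diffAt_of_isOpen hU hx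
  have h2 : ∀ j μ ν σ, pd (pd (lam j μ) ν) σ x - pd (pd (lam j ν) μ) σ x
      = (pd (lam j μ) σ x * ω ν x + lam j μ x * pd (ω ν) σ x)
        - (pd (lam j ν) σ x * ω μ x + lam j ν x * pd (ω μ) σ x) := by
    intro j μ ν σ
    have := pd_congr_of_isOpen hU hx (fun y hy => hd y hy j μ ν) σ
    rwa [pd_sub (dp _ _ _) (dp _ _ _), pd_sub ((dl _ _).fun_mul (dw _)) ((dl _ _).fun_mul (dw _)),
      pd_mul (dl _ _) (dw _), pd_mul (dl _ _) (dw _)] at this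
  -- A third index `μ` distinct from `ν` and `σ`.
  obtain ⟨μ, hμ⟩ : ∃ μ : Fin n, μ ∉ ({ν, σ} : Finset (Fin n)) := by
    apply Finset.exists_mem_notMem_of_card_lt_card (t := Finset.univ) _ |>.imp
    · rintro μ ⟨-, h⟩
      exact h
    · have := Finset.card_le_two (a := ν) (b := σ)
      simp only [Finset.card_univ, Fintype.card_fin]
      omega
  simp only [Finset.mem_insert, Finset.mem_singleton, not_or] at hμ
  -- The component `(μ, ν, σ)` of `dω ∧ λ_j = 0`.
  have h3 : ∀ j, lam j μ x * (pd (ω ν) σ x - pd (ω σ) ν x)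
      + lam j ν x * (pd (ω σ) μ x - pd (ω μ) σ x)
      + lam j σ x * (pd (ω μ) ν x - pd (ω ν) μ x) = 0 := by
    intro j
    have c1 := pd_comm (hlam j μ) hU hx ν σ
    have c2 := pd_comm (hlam j ν) hU hx σ μ
    have c3 := pd_comm (hlam j σ) hU hx μ ν
    linear_combination (-1) * h2 j μ ν σ - h2 j ν σ μ - h2 j σ μ ν + c1 + c2 + c3
      - ω ν x * hd x hx j μ σ - ω σ x * hd x hx j ν μ - ω μ x * hd x hx j σ ν
  have h4 : ∑ j, laminv j μ x * (lam j μ x * (pd (ω ν) σ x - pd (ω σ) ν x)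
      + lam j ν x * (pd (ω σ) μ x - pd (ω μ) σ x)
      + lam j σ x * (pd (ω μ) ν x - pd (ω ν) μ x)) = 0 := by
    simp [h3]
  simp only [mul_add, Finset.sum_add_distrib, ← mul_assoc, ← Finset.sum_mul, hinv x hx] at h4
  simp only [if_true, if_neg hμ.1, if_neg hμ.2] at h4
  linarith

/-- The Levi-Civita coefficients of the metric `Σ_i θ_i ⊗ θ_i` of a coframe of closed forms `θ_i`
are those of the canonical connection of `θ`. -/
theorem leviCivita_eq_canonical
    {x : Fin n → ℝ} {θ T : Fin n → Fin n → (Fin n → ℝ) → ℝ}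
    (hθ : ∀ i μ, DifferentiableAt ℝ (θ i μ) x)
    (hinv : ∀ i j, (∑ μ, T i μ x * θ j μ x) = if i = j then (1:ℝ) else 0)
    (hclosed : ∀ i μ ν, pd (θ i μ) ν x = pd (θ i ν) μ x)
    {g ginv : Fin n → Fin n → (Fin n → ℝ) → ℝ}
    (hg : ∀ μ ν y, g μ ν y = ∑ i, θ i μ y * θ i ν y)
    (hginv : ∀ μ ν, (∑ σ, g μ σ x * ginv σ ν x) = if μ = ν then (1:ℝ) else 0)
    (α μ ν : Fin n) :
    (1/2) * ∑ ε, ginv α ε x * (pd (g ε ν) μ x + pd (g ε μ) ν x - pd (g μ ν) ε x)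
      = ∑ i, T i α x * pd (θ i μ) ν x := by
  have hpd : ∀ μ ν σ, pd (g μ ν) σ x
      = ∑ i, (pd (θ i μ) σ x * θ i ν x + θ i μ x * pd (θ i ν) σ x) := by
    intro μ ν σ
    rw [show g μ ν = fun y => ∑ i, θ i μ y * θ i ν y from funext (hg μ ν),
      pd_sum fun i _ => (hθ i μ).fun_mul (hθ i ν)]
    exact Finset.sum_congr rfl fun i _ => pd_mul (hθ i μ) (hθ i ν) σ
  have hlower : ∀ ε, pd (g ε ν) μ x + pd (g ε μ) ν x - pd (g μ ν) ε x
      = 2 * ∑ i, θ i ε x * pd (θ i μ) ν x := by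
    intro ε
    rw [hpd, hpd, hpd, ← Finset.sum_add_distrib, ← Finset.sum_sub_distrib, Finset.mul_sum]
    refine Finset.sum_congr rfl fun i _ => ?_
    rw [hclosed i ν μ, hclosed i ε μ, hclosed i ε ν]
    ring
  -- `g⁻¹ θᵀ = Tᵀ`, obtained from `g = θᵀ θ` and `θ Tᵀ = 1`.
  have hraise : ∀ i, ∑ ε, ginv α ε x * θ i ε x = T i α x := by
    let Θ : Matrix (Fin n) (Fin n) ℝ := Matrix.of fun i μ => θ i μ x
    let S : Matrix (Fin n) (Fin n) ℝ := Matrix.of fun i μ => T i μ x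
    let H : Matrix (Fin n) (Fin n) ℝ := Matrix.of fun μ ν => ginv μ ν x
    have hST : S * Θ.transpose = 1 := by
      ext i j
      simp [Matrix.mul_apply, Matrix.one_apply, S, Θ, hinv]
    have hTS : Θ * S.transpose = 1 := by
      have := congrArg Matrix.transpose hST
      simpa using this
    have hGH : (Θ.transpose * Θ) * H = 1 := by
      ext μ ν
      simp [Matrix.mul_apply, Matrix.one_apply, Θ, H, ← hg, hginv]
    have hHG : H * (Θ.transpose * Θ) = 1 := mul_eq_one_comm.1 hGH
    have : H * Θ.transpose = S.transpose := by
      calc H * Θ.transpose = H * (Θ.transpose * Θ) * S.transpose := by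
            rw [Matrix.mul_assoc, Matrix.mul_assoc, hTS, Matrix.mul_one]
        _ = S.transpose := by rw [hHG, Matrix.one_mul]
    intro i
    have := congrFun (congrFun this α) i
    simpa [Matrix.mul_apply, H, Θ, S] using this
  calc (1/2) * ∑ ε, ginv α ε x * (pd (g ε ν) μ x + pd (g ε μ) ν x - pd (g μ ν) ε x)
      = ∑ ε, ∑ i, ginv α ε x * θ i ε x * pd (θ i μ) ν x := by
        rw [Finset.mul_sum]
        refine Finset.sum_congr rfl fun ε _ => ?_
        rw [hlower, Finset.mul_sum, Finset.mul_sum, Finset.mul_sum]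
        exact Finset.sum_congr rfl fun i _ => by ring
    _ = ∑ i, T i α x * pd (θ i μ) ν x := by
        rw [Finset.sum_comm]
        refine Finset.sum_congr rfl fun i _ => ?_
        rw [← Finset.sum_mul, hraise]

/-- The canonical connection `Σ_i T_i^α ∂_ν θ_{iμ}` of a frame has vanishing curvature. -/
theorem canonical_curvature_eq_zero (hU : IsOpen U)
    {θ T : Fin n → Fin n → (Fin n → ℝ) → ℝ}
    (hθ : ∀ i μ, ContDiffOn ℝ (⊤ : ℕ∞) (θ i μ) U)
    (hT : ∀ i μ, ContDiffOn ℝ (⊤ : ℕ∞) (T i μ) U)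
    (hinv₁ : ∀ x ∈ U, ∀ μ ν, (∑ i, T i μ x * θ i ν x) = if μ = ν then (1:ℝ) else 0)
    (hinv₂ : ∀ x ∈ U, ∀ i j, (∑ μ, T i μ x * θ j μ x) = if i = j then (1:ℝ) else 0)
    {Γ : Fin n → Fin n → Fin n → (Fin n → ℝ) → ℝ}
    (hΓ : ∀ x ∈ U, ∀ α μ ν, Γ α μ ν x = ∑ i, T i α x * pd (θ i μ) ν x)
    {x : Fin n → ℝ} (hx : x ∈ U) (α μ ν σ : Fin n) :
    pd (Γ α μ σ) ν x - pd (Γ α μ ν) σ x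
      + ∑ ε, (Γ α ε ν x * Γ ε μ σ x - Γ α ε σ x * Γ ε μ ν x) = 0 := by
  have dθ : ∀ j μ, DifferentiableAt ℝ (θ j μ) x := fun j μ => (hθ j μ).diffAt_of_isOpen hU hx
  have dT : ∀ j μ, DifferentiableAt ℝ (T j μ) x := fun j μ => (hT j μ).diffAt_of_isOpen hU hx
  have dp : ∀ j μ ν, DifferentiableAt ℝ (pd (θ j μ) ν) x := fun j μ ν =>
    (contDiffOn_pd (hθ j μ) hU ν).diffAt_of_isOpen hU hx
  have hdΓ : ∀ σ ν, pd (Γ α μ σ) ν x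
      = ∑ i, (pd (T i α) ν x * pd (θ i μ) σ x + T i α x * pd (pd (θ i μ) σ) ν x) := by
    intro σ ν
    rw [pd_congr_of_isOpen hU hx (fun y hy => hΓ y hy α μ σ) ν,
      pd_sum fun i _ => (dT i α).fun_mul (dp i μ σ)]
    exact Finset.sum_congr rfl fun i _ => pd_mul (dT i α) (dp i μ σ) ν
  -- Differentiating `Σ_ε T_j^ε θ_{iε} = δ_{ij}`.
  have hdinv : ∀ ν i j, ∑ ε, pd (θ i ε) ν x * T j ε x = - ∑ ε, pd (T j ε) ν x * θ i ε x := by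
    intro ν i j
    have h := pd_congr_of_isOpen hU hx (fun y hy => hinv₂ y hy j i) ν
    rw [pd_sum fun ε _ => (dT j ε).fun_mul (dθ i ε),
      Finset.sum_congr rfl fun ε _ => pd_mul (dT j ε) (dθ i ε) ν, Finset.sum_add_distrib] at h
    have h0 : pd (fun _ : Fin n → ℝ => if j = i then (1:ℝ) else 0) ν x = 0 := by simp [pd]
    rw [h0] at h
    rw [Finset.sum_congr rfl fun ε _ => mul_comm (pd (θ i ε) ν x) (T j ε x)]
    linarith
  have hcol : ∀ ν j, ∑ ε, Γ α ε ν x * T j ε x = - pd (T j α) ν x := by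
    intro ν j
    calc ∑ ε, Γ α ε ν x * T j ε x
        = ∑ i, T i α x * ∑ ε, pd (θ i ε) ν x * T j ε x := by
          simp only [hΓ x hx, Finset.sum_mul, Finset.mul_sum]
          rw [Finset.sum_comm]
          exact Finset.sum_congr rfl fun i _ => Finset.sum_congr rfl fun ε _ => by ring
      _ = - ∑ ε, pd (T j ε) ν x * ∑ i, T i α x * θ i ε x := by
          simp only [hdinv, Finset.mul_sum, mul_neg, Finset.sum_neg_distrib]
          rw [Finset.sum_comm]
          congr 1
          exact Finset.sum_congr rfl fun i _ => Finset.sum_congr rfl fun ε _ => by ring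
      _ = - pd (T j α) ν x := by simp [hinv₁ x hx]
  have hquad : ∀ ν σ, ∑ ε, Γ α ε ν x * Γ ε μ σ x = - ∑ j, pd (T j α) ν x * pd (θ j μ) σ x := by
    intro ν σ
    calc ∑ ε, Γ α ε ν x * Γ ε μ σ x
        = ∑ j, (∑ ε, Γ α ε ν x * T j ε x) * pd (θ j μ) σ x := by
          rw [Finset.sum_congr rfl fun ε _ => by rw [hΓ x hx ε μ σ, Finset.mul_sum],
            Finset.sum_comm]
          simp only [Finset.sum_mul]
          exact Finset.sum_congr rfl fun i _ => Finset.sum_congr rfl fun ε _ => by ring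
      _ = _ := by simp [hcol]
  have hcomm : ∑ i, T i α x * pd (pd (θ i μ) σ) ν x = ∑ i, T i α x * pd (pd (θ i μ) ν) σ x :=
    Finset.sum_congr rfl fun i _ => by rw [pd_comm (hθ i μ) hU hx σ ν]
  rw [Finset.sum_sub_distrib, hquad, hquad, hdΓ, hdΓ, Finset.sum_add_distrib,
    Finset.sum_add_distrib, hcomm]
  ring

end Frames

/-! ### Conformal flatness -/

/-- For an SAP-frame on a star-shaped open set U ⊆ ℝⁿ (n ≥ 3), the associated Riemannian
metric g_{μν} = Σ_i λ_{iμ} λ_{iν} is conformally flat: there is a smooth potential f with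
∂_μ f = ω_μ on U such that the rescaled metric ĝ_{μν} = e^{−2f} g_{μν} has identically
vanishing Riemann curvature tensor. -/
theorem sap_metric_conformally_flat
    (n : ℕ) (hn : 3 ≤ n)
    (U : Set (Fin n → ℝ)) (hU : IsOpen U)
    (c : Fin n → ℝ) (hc : c ∈ U) (hstar : StarConvex ℝ c U)
    (lam laminv : Fin n → Fin n → (Fin n → ℝ) → ℝ)
    (hlam_smooth : ∀ i μ, ContDiffOn ℝ (⊤ : ℕ∞) (lam i μ) U)
    (hlaminv_smooth : ∀ i μ, ContDiffOn ℝ (⊤ : ℕ∞) (laminv i μ) U)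
    (hinv₁ : ∀ x ∈ U, ∀ μ ν, (∑ i, laminv i μ x * lam i ν x) = if μ = ν then (1:ℝ) else 0)
    (hinv₂ : ∀ x ∈ U, ∀ i j, (∑ μ, laminv i μ x * lam j μ x) = if i = j then (1:ℝ) else 0)
    -- the canonical (Weitzenböck) connection Γ^α_{μν} = Σ_i λ_i^α ∂_ν λ_{iμ}
    (Γ : Fin n → Fin n → Fin n → (Fin n → ℝ) → ℝ)
    (hΓ : ∀ α μ ν x, Γ α μ ν x = ∑ i, laminv i α x * pd (lam i μ) ν x)
    -- the SAP (semi-symmetry) condition: Λ^α_{μν} = δ^α_μ ω_ν − δ^α_ν ω_μ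
    (ω : Fin n → (Fin n → ℝ) → ℝ)
    (hω_smooth : ∀ μ, ContDiffOn ℝ (⊤ : ℕ∞) (ω μ) U)
    (hSAP : ∀ x ∈ U, ∀ α μ ν,
      Γ α μ ν x - Γ α ν μ x
        = (if α = μ then ω ν x else 0) - (if α = ν then ω μ x else 0)) :
    ∃ f : (Fin n → ℝ) → ℝ,
      ContDiffOn ℝ (⊤ : ℕ∞) f U ∧
      (∀ x ∈ U, ∀ μ, pd f μ x = ω μ x) ∧
      -- the conformally rescaled metric ĝ_{μν} = e^{−2f} g_{μν} is flat:
      ∀ (ghat ghatinv : Fin n → Fin n → (Fin n → ℝ) → ℝ)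
        (Γhat : Fin n → Fin n → Fin n → (Fin n → ℝ) → ℝ),
        (∀ μ ν x, ghat μ ν x = Real.exp (-2 * f x) * ∑ i, lam i μ x * lam i ν x) →
        (∀ μ ν, ContDiffOn ℝ (⊤ : ℕ∞) (ghatinv μ ν) U) →
        (∀ x ∈ U, ∀ μ ν, (∑ σ, ghat μ σ x * ghatinv σ ν x) = if μ = ν then (1:ℝ) else 0) →
        -- Γ̂ = Levi-Civita coefficients of ĝ
        (∀ α μ ν x, Γhat α μ ν x
          = (1/2) * ∑ ε, ghatinv α ε x *
              (pd (ghat ε ν) μ x + pd (ghat ε μ) ν x - pd (ghat μ ν) ε x)) →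
        ∀ α μ ν σ, ∀ x ∈ U,
          pd (Γhat α μ σ) ν x - pd (Γhat α μ ν) σ x
            + ∑ ε, (Γhat α ε ν x * Γhat ε μ σ x - Γhat α ε σ x * Γhat ε μ ν x) = 0 := by
  -- Contracting the torsion with `λ_{jα}` gives `dλ_j = ω ∧ λ_j` in coordinates.
  have hd : ∀ x ∈ U, ∀ j μ ν, pd (lam j μ) ν x - pd (lam j ν) μ x
      = lam j μ x * ω ν x - lam j ν x * ω μ x := by
    intro x hx j μ ν
    have hcontr : ∀ μ ν, ∑ α, lam j α x * Γ α μ ν x = pd (lam j μ) ν x := by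
      intro μ ν
      calc ∑ α, lam j α x * Γ α μ ν x
          = ∑ i, (∑ α, laminv i α x * lam j α x) * pd (lam i μ) ν x := by
            simp only [hΓ, Finset.mul_sum, Finset.sum_mul]
            rw [Finset.sum_comm]
            exact Finset.sum_congr rfl fun i _ => Finset.sum_congr rfl fun ε _ => by ring
        _ = pd (lam j μ) ν x := by simp [hinv₂ x hx]
    rw [← hcontr μ ν, ← hcontr ν μ, ← Finset.sum_sub_distrib]
    simp only [← mul_sub, hSAP x hx]
    simp [mul_sub, Finset.sum_sub_distrib]
  obtain ⟨f, hf, hfω⟩ := exists_potential hU hstar hω_smooth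
    (sap_form_closed hn hU hlam_smooth hinv₁ hω_smooth hd)
  refine ⟨f, hf, hfω, ?_⟩
  intro ghat ghatinv Γhat hghat _ hghatinv hΓhat α μ ν σ x hx
  let E : (Fin n → ℝ) → ℝ := fun y => Real.exp (-f y)
  let θ : Fin n → Fin n → (Fin n → ℝ) → ℝ := fun i μ y => E y * lam i μ y
  let T : Fin n → Fin n → (Fin n → ℝ) → ℝ := fun i μ y => Real.exp (f y) * laminv i μ y
  have hE : ContDiffOn ℝ (⊤ : ℕ∞) E U := hf.neg.exp
  have hθ : ∀ i μ, ContDiffOn ℝ (⊤ : ℕ∞) (θ i μ) U := fun i μ => hE.mul (hlam_smooth i μ)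
  have hT : ∀ i μ, ContDiffOn ℝ (⊤ : ℕ∞) (T i μ) U := fun i μ => hf.exp.mul (hlaminv_smooth i μ)
  have hTθ : ∀ y i j μ ν, T i μ y * θ j ν y = laminv i μ y * lam j ν y := by
    intro y i j μ ν
    have : Real.exp (f y) * E y = 1 := by simp [E, ← Real.exp_add]
    simp only [T, θ]
    linear_combination (laminv i μ y * lam j ν y) * this
  have hi₁ : ∀ y ∈ U, ∀ μ ν, (∑ i, T i μ y * θ i ν y) = if μ = ν then (1:ℝ) else 0 := by
    intro y hy μ ν
    simp only [hTθ, hinv₁ y hy]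
  have hi₂ : ∀ y ∈ U, ∀ i j, (∑ μ, T i μ y * θ j μ y) = if i = j then (1:ℝ) else 0 := by
    intro y hy i j
    simp only [hTθ, hinv₂ y hy]
  have hpdE : ∀ y ∈ U, ∀ ν, pd E ν y = - (E y * ω ν y) := by
    intro y hy ν
    have h := ((hf.diffAt_of_isOpen hU hy).hasFDerivAt.fun_neg).exp
    rw [← hfω y hy ν, pd, pd, h.fderiv]
    simp [E]
  have hclosed : ∀ y ∈ U, ∀ i μ ν, pd (θ i μ) ν y = pd (θ i ν) μ y := by
    intro y hy i μ ν
    have dE := hE.diffAt_of_isOpen hU hy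
    have dl : ∀ μ, DifferentiableAt ℝ (lam i μ) y := fun μ =>
      (hlam_smooth i μ).diffAt_of_isOpen hU hy
    simp only [θ]
    rw [pd_mul dE (dl μ), pd_mul dE (dl ν), hpdE y hy, hpdE y hy]
    linear_combination E y * hd y hy i μ ν
  have hg : ∀ μ ν y, ghat μ ν y = ∑ i, θ i μ y * θ i ν y := by
    intro μ ν y
    have : Real.exp (-2 * f y) = E y * E y := by
      simp only [E, ← Real.exp_add]
      ring_nf
    rw [hghat, this, Finset.mul_sum]
    exact Finset.sum_congr rfl fun i _ => by simp only [θ]; ring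
  refine canonical_curvature_eq_zero hU hθ hT hi₁ hi₂ (fun y hy α μ ν => ?_) hx α μ ν σ
  rw [hΓhat]
  exact leviCivita_eq_canonical (fun i μ => (hθ i μ).diffAt_of_isOpen hU hy) (hi₂ y hy)
    (hclosed y hy) hg (hghatinv y hy) α μ ν
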